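/- arXiv:1912.03398 — 2 statements merged into one kernel-verified Lean document; each statement's English description precedes it below -/
import Mathlib

section
/- For every positive integer m, the subgroup of the quotient group G_m = U/N_m generated by the images of a and b has order 128; consequently, the restriction to this subgroup of the natural homomorphism G_m → G_1 is injective. -/
/-- The defining relators of the group `U` on generators `a, b, c` (indexed `0, 1, 2`):
`a^4, b^4, c^4, (ab)^2, (bc)^2, (abc)^2, (a^2b^2)^4, a^2c^2b^2(ac)^2, [a,c⁻¹]b^2`,
where `[x,y] = x⁻¹y⁻¹xy`. -/
def Urels : Set (FreeGroup (Fin 3)) :=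
  {(FreeGroup.of 0) ^ 4, (FreeGroup.of 1) ^ 4, (FreeGroup.of 2) ^ 4,
   (FreeGroup.of 0 * FreeGroup.of 1) ^ 2,
   (FreeGroup.of 1 * FreeGroup.of 2) ^ 2,
   (FreeGroup.of 0 * FreeGroup.of 1 * FreeGroup.of 2) ^ 2,
   ((FreeGroup.of 0) ^ 2 * (FreeGroup.of 1) ^ 2) ^ 4,
   (FreeGroup.of 0) ^ 2 * (FreeGroup.of 2) ^ 2 * (FreeGroup.of 1) ^ 2 *
     (FreeGroup.of 0 * FreeGroup.of 2) ^ 2,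
   (FreeGroup.of 0)⁻¹ * FreeGroup.of 2 * FreeGroup.of 0 * (FreeGroup.of 2)⁻¹ *
     (FreeGroup.of 1) ^ 2}

/-- The finitely presented group `U`. -/
abbrev UGroup : Type := PresentedGroup Urels

/-- The generator `a` of `U`. -/
def Ua : UGroup := PresentedGroup.of 0

/-- The generator `b` of `U`. -/
def Ub : UGroup := PresentedGroup.of 1

/-- The generator `c` of `U`. -/
def Uc : UGroup := PresentedGroup.of 2

/-- The element `x = (ac⁻¹)^4` of `U`. -/
def Ux : UGroup := (Ua * Uc⁻¹) ^ 4

/-- The element `y = (c⁻¹a)^4` of `U`. -/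
def Uy : UGroup := (Uc⁻¹ * Ua) ^ 4

/-- The subgroup `N_m = ⟨x^m, y^m⟩` of `U`. -/
def UN (m : ℕ) : Subgroup UGroup := Subgroup.closure {Ux ^ m, Uy ^ m}

section helpers

/-- The self-map of `Fin 64` whose table is packed in base 64 in the number `N`. -/
def tab (N : ℕ) (x : Fin 64) : Fin 64 := Fin.ofNat 64 (N / 64 ^ x.val)

/-- A permutation of order dividing four from a packed table. -/
def mkP (N : ℕ) (h : ∀ x, tab N (tab N (tab N (tab N x))) = x) : Equiv.Perm (Fin 64) where
  toFun := tab N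
  invFun := fun x => tab N (tab N (tab N x))
  left_inv := fun x => h x
  right_inv := fun x => h x

def pA : Equiv.Perm (Fin 64) := mkP
  37918753552883932574084620126922900123510392565565520322415436372002773203361908806473208464975033725393450555684293 (by decide +kernel)

def pB : Equiv.Perm (Fin 64) := mkP
  34656813294208266374774743627191722901015547243186709728163505017690550835400997915072288085902566891770537801945092 (by decide +kernel)

def pC : Equiv.Perm (Fin 64) := mkP
  22028198547980559594557359668009764762716693676397746578717580562157734172816722798750208675968230539194499494671946 (by decide +kernel)

def pGen : Fin 3 → Equiv.Perm (Fin 64) := ![pA, pB, pC]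

theorem pGen_rels : ∀ r ∈ Urels, FreeGroup.lift pGen r = 1 := by
  intro r hr
  simp only [Urels, Set.mem_insert_iff, Set.mem_singleton_iff] at hr
  rcases hr with h | h | h | h | h | h | h | h | h <;> subst h <;>
    simp only [map_mul, map_pow, map_inv, FreeGroup.lift_apply_of] <;>
    decide +kernel

/-- Representation of `U` by permutations of 64 points. -/
def rho : UGroup →* Equiv.Perm (Fin 64) := PresentedGroup.toGroup pGen_rels

theorem rho_a : rho Ua = pA := PresentedGroup.toGroup.of pGen_rels
theorem rho_b : rho Ub = pB := PresentedGroup.toGroup.of pGen_rels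
theorem rho_c : rho Uc = pC := PresentedGroup.toGroup.of pGen_rels

theorem rho_x : rho Ux = 1 := by
  rw [Ux, map_pow, map_mul, map_inv, rho_a, rho_c]
  decide +kernel

theorem rho_y : rho Uy = 1 := by
  rw [Uy, map_pow, map_mul, map_inv, rho_a, rho_c]
  decide +kernel

theorem rho_UN (m : ℕ) : UN m ≤ rho.ker := by
  rw [UN, Subgroup.closure_le]
  rintro g (rfl | rfl)
  · simp [MonoidHom.mem_ker, rho_x]
  · simp [MonoidHom.mem_ker, rho_y]

/-- Normal form in the group generated by `a` and `b`. -/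
def nf {G : Type*} [Group G] (a b : G) (p : Fin 8 × Fin 4 × Fin 4) : G :=
  (a * b⁻¹) ^ p.1.val * (a⁻¹ * b) ^ p.2.1.val * a ^ p.2.2.val

theorem map_nf {G K : Type*} [Group G] [Group K] (f : G →* K) (a b : G)
    (p : Fin 8 × Fin 4 × Fin 4) : f (nf a b p) = nf (f a) (f b) p := by
  simp [nf]

theorem nf_perm_inj : Function.Injective (nf pA pB) := by
  have h : Function.Injective (fun p : Fin 8 × Fin 4 × Fin 4 =>
      64 * (nf pA pB p 0).val + (nf pA pB p 1).val) := by
    have h2 : ((List.finRange 8 ×ˢ (List.finRange 4 ×ˢ List.finRange 4)).map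
      (fun p : Fin 8 × Fin 4 × Fin 4 =>
      64 * (nf pA pB p 0).val + (nf pA pB p 1).val)).Nodup := by decide +kernel
    intro p q hpq
    exact List.inj_on_of_nodup_map h2 (List.mem_product.2 ⟨List.mem_finRange _, List.mem_product.2 ⟨List.mem_finRange _, List.mem_finRange _⟩⟩) (List.mem_product.2 ⟨List.mem_finRange _, List.mem_product.2 ⟨List.mem_finRange _, List.mem_finRange _⟩⟩) hpq
  intro p q hpq
  apply h
  simp only [hpq]

section abstract
variable {G : Type*} [Group G] {a b : G}

theorem conj_t (ha : a ^ 4 = 1) (hab : (a * b) ^ 2 = 1) :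
    a * (a * b⁻¹) = (a⁻¹ * b) * a := by
  have h2 : b * a = a⁻¹ * b⁻¹ := by
    rw [← mul_inv_rev, eq_inv_iff_mul_eq_one]
    calc b * a * (b * a) = a⁻¹ * (a * b) ^ 2 * a := by rw [pow_two]; group
      _ = 1 := by rw [hab]; group
  calc a * (a * b⁻¹) = a ^ 4 * (a⁻¹ * (a⁻¹ * b⁻¹)) := by
        simp [pow_succ, mul_assoc]
    _ = a⁻¹ * (b * a) := by rw [ha, h2, one_mul]
    _ = _ := by group

theorem conj_s : a * (a⁻¹ * b) = (a * b⁻¹)⁻¹ * a := by group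

theorem ts_eq (hab : (a * b) ^ 2 = 1) :
    (a * b⁻¹) * (a⁻¹ * b) = a ^ 2 * b ^ 2 := by
  have h2 : b⁻¹ * a⁻¹ = a * b := by
    rw [← mul_inv_rev, inv_eq_iff_mul_eq_one, ← pow_two, hab]
  calc (a * b⁻¹) * (a⁻¹ * b) = a * (b⁻¹ * a⁻¹) * b := by group
    _ = a * (a * b) * b := by rw [h2]
    _ = _ := by simp only [pow_two, mul_assoc]

theorem st_eq (ha : a ^ 4 = 1) (hb : b ^ 4 = 1) (hab : (a * b) ^ 2 = 1) :
    (a⁻¹ * b) * (a * b⁻¹) = a ^ 2 * b ^ 2 := by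
  have h2 : b * a = a⁻¹ * b⁻¹ := by
    rw [← mul_inv_rev, eq_inv_iff_mul_eq_one]
    calc b * a * (b * a) = a⁻¹ * (a * b) ^ 2 * a := by rw [pow_two]; group
      _ = 1 := by rw [hab]; group
  calc (a⁻¹ * b) * (a * b⁻¹) = a⁻¹ * (b * a) * b⁻¹ := by group
    _ = a⁻¹ * (a⁻¹ * b⁻¹) * b⁻¹ := by rw [h2]
    _ = (a ^ 4)⁻¹ * a ^ 2 * b ^ 2 * (b ^ 4)⁻¹ := by group
    _ = _ := by rw [ha, hb]; group

theorem nf_surj (ha : a ^ 4 = 1) (hb : b ^ 4 = 1) (hab : (a * b) ^ 2 = 1)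
    (h4 : (a ^ 2 * b ^ 2) ^ 4 = 1) {g : G} (hg : g ∈ Subgroup.closure {a, b}) :
    ∃ p, nf a b p = g := by
  have hct := conj_t ha hab
  have hcs := conj_s (a := a) (b := b)
  have hts : Commute (a * b⁻¹) (a⁻¹ * b) := (ts_eq hab).trans (st_eq ha hb hab).symm
  have h44 : ((a * b⁻¹) * (a⁻¹ * b)) ^ 4 = 1 := by rw [ts_eq hab, h4]
  have hbt : b = (a * b⁻¹)⁻¹ * a := by group
  have hnf : nf a b = fun p =>
    (a * b⁻¹) ^ p.1.val * (a⁻¹ * b) ^ p.2.1.val * a ^ p.2.2.val := rfl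
  rw [hnf]
  generalize a * b⁻¹ = t at *
  generalize a⁻¹ * b = s at *
  have hconj1 : SemiconjBy a t s := hct
  have hconj2 : SemiconjBy a s t⁻¹ := hcs
  have e1 : t ^ 4 * s ^ 4 = 1 := by rw [← hts.mul_pow, h44]
  have e2 : s ^ 4 = t ^ 4 := by
    have h := (hconj1.pow_right 4).mul_right (hconj2.pow_right 4)
    rw [e1] at h
    have h5 : s ^ 4 * t⁻¹ ^ 4 = 1 := by
      have h6 : a * 1 = (s ^ 4 * t⁻¹ ^ 4) * a := h
      simpa using h6
    rw [inv_pow, mul_inv_eq_one] at h5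
    exact h5
  have t8 : t ^ 8 = 1 := by
    rw [e2, ← pow_add] at e1
    exact e1
  have tinv : t⁻¹ = t ^ 7 := inv_eq_of_mul_eq_one_right (by rw [← pow_succ', t8])
  rw [tinv] at hconj2 hbt
  -- existence of natural exponents is enough
  have red : ∀ i j k : ℕ, ∃ p : Fin 8 × Fin 4 × Fin 4,
      t ^ p.1.val * s ^ p.2.1.val * a ^ p.2.2.val = t ^ i * s ^ j * a ^ k := by
    intro i j k
    refine ⟨(⟨(i + 4 * (j / 4)) % 8, by omega⟩, ⟨j % 4, by omega⟩, ⟨k % 4, by omega⟩), ?_⟩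
    dsimp only
    rw [← pow_eq_pow_mod _ t8, ← pow_eq_pow_mod _ ha, pow_add, pow_mul, ← e2, ← pow_mul,
      mul_assoc (t ^ i), ← pow_add, Nat.div_add_mod]
  suffices hs : ∃ i j k : ℕ, t ^ i * s ^ j * a ^ k = g by
    obtain ⟨i, j, k, rfl⟩ := hs
    exact red i j k
  have stepa : ∀ y, (∃ i j k : ℕ, t ^ i * s ^ j * a ^ k = y) →
      ∃ i j k : ℕ, t ^ i * s ^ j * a ^ k = a * y := by
    rintro y ⟨i, j, k, rfl⟩
    refine ⟨7 * j, i, k + 1, ?_⟩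
    have h1 : a * t ^ i = s ^ i * a := (hconj1.pow_right i)
    have h2 : a * s ^ j = (t ^ 7) ^ j * a := (hconj2.pow_right j)
    have h3 : t ^ (7 * j) * s ^ i = s ^ i * t ^ (7 * j) := hts.pow_pow _ _
    calc t ^ (7 * j) * s ^ i * a ^ (k + 1) = s ^ i * ((t ^ 7) ^ j * a) * a ^ k := by
          rw [h3, pow_succ', pow_mul]; simp only [mul_assoc]
      _ = (s ^ i * a) * s ^ j * a ^ k := by rw [← h2]; simp only [mul_assoc]
      _ = _ := by rw [← h1]; simp only [mul_assoc]
  have stepb : ∀ y, (∃ i j k : ℕ, t ^ i * s ^ j * a ^ k = y) →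
      ∃ i j k : ℕ, t ^ i * s ^ j * a ^ k = b * y := by
    intro y hy
    obtain ⟨i, j, k, h⟩ := stepa y hy
    refine ⟨7 + i, j, k, ?_⟩
    rw [hbt, mul_assoc (t ^ 7), ← h, pow_add]
    simp only [mul_assoc]
  have ainv : a⁻¹ = a * (a * a) := inv_eq_of_mul_eq_one_right (by rw [← ha]; simp only [pow_succ, pow_zero, one_mul, mul_assoc])
  have binv : b⁻¹ = b * (b * b) := by
    clear hbt
    exact inv_eq_of_mul_eq_one_right (by rw [← hb]; simp only [pow_succ, pow_zero, one_mul, mul_assoc])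
  induction hg using Subgroup.closure_induction_left with
  | one => exact ⟨0, 0, 0, by simp⟩
  | mul_left x hx y hy ih =>
    rcases hx with hx | hx
    · rw [hx]; exact stepa y ih
    · rw [Set.mem_singleton_iff.1 hx]; exact stepb y ih
  | inv_mul_cancel x hx y hy ih =>
    rcases hx with hx | hx
    · rw [hx, ainv, mul_assoc, mul_assoc]; exact stepa _ (stepa _ (stepa _ ih))
    · rw [Set.mem_singleton_iff.1 hx, binv, mul_assoc, mul_assoc]
      exact stepb _ (stepb _ (stepb _ ih))

theorem nf_mem (p : Fin 8 × Fin 4 × Fin 4) : nf a b p ∈ Subgroup.closure {a, b} := by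
  have h1 : a ∈ Subgroup.closure {a, b} := Subgroup.subset_closure (by simp)
  have h2 : b ∈ Subgroup.closure {a, b} := Subgroup.subset_closure (by simp)
  exact mul_mem (mul_mem (pow_mem (mul_mem h1 (inv_mem h2)) _)
    (pow_mem (mul_mem (inv_mem h1) h2) _)) (pow_mem h1 _)

end abstract

theorem U_rel {r : FreeGroup (Fin 3)} (h : r ∈ Urels) : PresentedGroup.mk Urels r = 1 :=
  PresentedGroup.one_of_mem h

theorem Ua4 : Ua ^ 4 = 1 :=
  U_rel (r := (FreeGroup.of 0) ^ 4) (by simp [Urels])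

theorem Ub4 : Ub ^ 4 = 1 :=
  U_rel (r := (FreeGroup.of 1) ^ 4) (by simp [Urels])

theorem Uab2 : (Ua * Ub) ^ 2 = 1 :=
  U_rel (r := (FreeGroup.of 0 * FreeGroup.of 1) ^ 2) (by simp [Urels])

theorem Uab4 : (Ua ^ 2 * Ub ^ 2) ^ 4 = 1 :=
  U_rel (r := ((FreeGroup.of 0) ^ 2 * (FreeGroup.of 1) ^ 2) ^ 4) (by simp [Urels])

theorem Q_surj (m : ℕ) [hn : (UN m).Normal] {g : UGroup ⧸ UN m}
    (hg : g ∈ Subgroup.closure {(QuotientGroup.mk Ua : UGroup ⧸ UN m),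
        (QuotientGroup.mk Ub : UGroup ⧸ UN m)}) :
    ∃ p, (QuotientGroup.mk (nf Ua Ub p) : UGroup ⧸ UN m) = g := by
  have key : ∀ {u : UGroup}, u = 1 → QuotientGroup.mk' (UN m) u = 1 := by
    rintro u rfl; exact map_one _
  obtain ⟨p, hp⟩ := nf_surj (a := (QuotientGroup.mk Ua : UGroup ⧸ UN m))
    (b := (QuotientGroup.mk Ub : UGroup ⧸ UN m)) (key Ua4) (key Ub4) (key Uab2) (key Uab4) hg
  exact ⟨p, (map_nf (QuotientGroup.mk' (UN m)) Ua Ub p).trans hp⟩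

theorem Q_inj (m : ℕ) [hn : (UN m).Normal] {p q : Fin 8 × Fin 4 × Fin 4}
    (h : (QuotientGroup.mk (nf Ua Ub p) : UGroup ⧸ UN m) = QuotientGroup.mk (nf Ua Ub q)) :
    p = q := by
  have h1 := congrArg (QuotientGroup.lift (UN m) rho (fun x hx => rho_UN m hx)) h
  have h2 : rho (nf Ua Ub p) = rho (nf Ua Ub q) := h1
  rw [map_nf, map_nf, rho_a, rho_b] at h2
  exact nf_perm_inj h2

end helpers

/-- For every positive integer `m`, the subgroup of `G_m = U / N_m` generated by the
images of `a` and `b` has order `128`; consequently the restriction to this subgroup of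
the natural homomorphism `G_m → G_1` is injective. -/
theorem ab_image_order_128 (m : ℕ) (hm : 0 < m)
    (hnm : (UN m).Normal) (hn1 : (UN 1).Normal) (hle : UN m ≤ UN 1) :
    haveI := hnm
    haveI := hn1
    Nat.card (Subgroup.closure {(QuotientGroup.mk Ua : UGroup ⧸ UN m),
        (QuotientGroup.mk Ub : UGroup ⧸ UN m)}) = 128 ∧
    Set.InjOn (QuotientGroup.map (UN m) (UN 1) (MonoidHom.id UGroup) (by simpa using hle))
      ((Subgroup.closure {(QuotientGroup.mk Ua : UGroup ⧸ UN m),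
        (QuotientGroup.mk Ub : UGroup ⧸ UN m)} : Subgroup (UGroup ⧸ UN m)) :
          Set (UGroup ⧸ UN m)) := by
  constructor
  · have e : Function.Bijective (fun p : Fin 8 × Fin 4 × Fin 4 =>
        (⟨QuotientGroup.mk (nf Ua Ub p), by
          have h := nf_mem (a := (QuotientGroup.mk Ua : UGroup ⧸ UN m))
            (b := (QuotientGroup.mk Ub : UGroup ⧸ UN m)) p
          have h2 : (QuotientGroup.mk (nf Ua Ub p) : UGroup ⧸ UN m) =
              nf (QuotientGroup.mk Ua : UGroup ⧸ UN m) (QuotientGroup.mk Ub) p :=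
            map_nf (QuotientGroup.mk' (UN m)) Ua Ub p
          rw [h2]
          exact h⟩ :
          Subgroup.closure {(QuotientGroup.mk Ua : UGroup ⧸ UN m),
            (QuotientGroup.mk Ub : UGroup ⧸ UN m)})) := by
      constructor
      · intro p q hpq
        exact Q_inj m (congrArg Subtype.val hpq)
      · rintro ⟨g, hg⟩
        obtain ⟨p, hp⟩ := Q_surj m hg
        exact ⟨p, Subtype.ext hp⟩
    rw [← Nat.card_congr (Equiv.ofBijective _ e)]
    simp
  · intro g hg g' hg' h
    obtain ⟨p, rfl⟩ := Q_surj m hg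
    obtain ⟨q, rfl⟩ := Q_surj m hg'
    have h2 : p = q := Q_inj 1 h
    rw [h2]
end

section
/- For every positive integer m, there is no group automorphism ρ of G_m = U/N_m such that ρ(ā) = ā^{-1}, ρ(b̄) = ā^2 b̄, and ρ(c̄) = c̄, where ā, b̄, c̄ denote the images of a, b, c in G_m. (This expresses the chirality of the polytope P_m whose rotation group is G_m.) -/
/-- Packed table of the permutation attached to `a`. -/
def tab_a : ℕ := 29355494730891070521745646215324492616205921413167402013068286745113420000688087872197631079238679179979629363611015

/-- Packed table of its inverse. -/
def tab_ai : ℕ := 34995001148888424432850980006997934169711627413147141247517719014351290076294625708574189947233557585954517210985987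

/-- Packed table of the permutation attached to `b`. -/
def tab_b : ℕ := 33177333444019640786766544884179172928666591420990577857783711049973147879314503840919949609778853514929328086587077

/-- Packed table of its inverse. -/
def tab_bi : ℕ := 33743994832452973143914636096310333736751727737013742177209102940964177434451357430494126488734515036234789610430596

/-- Packed table of the permutation attached to `c`. -/
def tab_c : ℕ := 38757485413694910283448747283207066134723163956733214832373560519593948014508277737308865950068783949519575982288906

/-- Packed table of its inverse. -/
def tab_ci : ℕ := 38170239200197680598381855604997164178726880862879921825414308976726233011450870059876046156134806826119902634988097

/-- Read the `i`-th base-64 digit. -/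
def look (N : ℕ) (i : Fin 64) : Fin 64 :=
  ⟨(N >>> (6 * i.val)) % 64, Nat.mod_lt _ (by norm_num)⟩

/-- The permutation attached to `a`. -/
def perm_a : Equiv.Perm (Fin 64) where
  toFun := look tab_a
  invFun := look tab_ai
  left_inv := by unfold Function.LeftInverse; decide +kernel
  right_inv := by unfold Function.RightInverse Function.LeftInverse; decide +kernel

/-- The permutation attached to `b`. -/
def perm_b : Equiv.Perm (Fin 64) where
  toFun := look tab_b
  invFun := look tab_bi
  left_inv := by unfold Function.LeftInverse; decide +kernel
  right_inv := by unfold Function.RightInverse Function.LeftInverse; decide +kernel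

/-- The permutation attached to `c`. -/
def perm_c : Equiv.Perm (Fin 64) where
  toFun := look tab_c
  invFun := look tab_ci
  left_inv := by unfold Function.LeftInverse; decide +kernel
  right_inv := by unfold Function.RightInverse Function.LeftInverse; decide +kernel

/-- Images of the generators. -/
def genImg : Fin 3 → Equiv.Perm (Fin 64) := ![perm_a, perm_b, perm_c]

theorem prel0 : perm_a ^ 4 = 1 := by
  apply Equiv.ext; decide +kernel

theorem prel1 : perm_b ^ 4 = 1 := by
  apply Equiv.ext; decide +kernel

theorem prel2 : perm_c ^ 4 = 1 := by
  apply Equiv.ext; decide +kernel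

theorem prel3 : (perm_a * perm_b) ^ 2 = 1 := by
  apply Equiv.ext; decide +kernel

theorem prel4 : (perm_b * perm_c) ^ 2 = 1 := by
  apply Equiv.ext; decide +kernel

theorem prel5 : (perm_a * perm_b * perm_c) ^ 2 = 1 := by
  apply Equiv.ext; decide +kernel

theorem prel6 : (perm_a ^ 2 * perm_b ^ 2) ^ 4 = 1 := by
  apply Equiv.ext; decide +kernel

theorem prel7 : perm_a ^ 2 * perm_c ^ 2 * perm_b ^ 2 * (perm_a * perm_c) ^ 2 = 1 := by
  apply Equiv.ext; decide +kernel

theorem prel8 : perm_a⁻¹ * perm_c * perm_a * perm_c⁻¹ * perm_b ^ 2 = 1 := by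
  apply Equiv.ext; decide +kernel

theorem prel9 : (perm_a * perm_c⁻¹) ^ 4 = 1 := by
  apply Equiv.ext; decide +kernel

theorem prel10 : (perm_c⁻¹ * perm_a) ^ 4 = 1 := by
  apply Equiv.ext; decide +kernel

theorem pmir : (perm_a⁻¹) ^ 2 * perm_c ^ 2 * (perm_a ^ 2 * perm_b) ^ 2 *
    (perm_a⁻¹ * perm_c) ^ 2 ≠ 1 := by
  intro h
  have h2 := Equiv.congr_fun h 0
  revert h2
  decide +kernel

theorem genImg_rels : ∀ r ∈ Urels, FreeGroup.lift genImg r = 1 := by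
  intro r hr
  simp only [Urels, Set.mem_insert_iff, Set.mem_singleton_iff] at hr
  have e0 : genImg 0 = perm_a := rfl
  have e1 : genImg 1 = perm_b := rfl
  have e2 : genImg 2 = perm_c := rfl
  rcases hr with rfl | rfl | rfl | rfl | rfl | rfl | rfl | rfl | rfl <;>
    simp only [map_mul, map_pow, map_inv, FreeGroup.lift_apply_of, e0, e1, e2]
  exacts [prel0, prel1, prel2, prel3, prel4, prel5, prel6, prel7, prel8]

/-- The permutation representation of `U`. -/
def Urep : UGroup →* Equiv.Perm (Fin 64) := PresentedGroup.toGroup genImg_rels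

theorem Urep_a : Urep Ua = perm_a := PresentedGroup.toGroup.of genImg_rels
theorem Urep_b : Urep Ub = perm_b := PresentedGroup.toGroup.of genImg_rels
theorem Urep_c : Urep Uc = perm_c := PresentedGroup.toGroup.of genImg_rels

theorem UN_le_ker (m : ℕ) : UN m ≤ Urep.ker := by
  rw [UN, Subgroup.closure_le]
  rintro g (rfl | rfl)
  · change Urep _ = 1
    rw [map_pow, Ux, map_pow, map_mul, map_inv, Urep_a, Urep_c, prel9, one_pow]
  · change Urep _ = 1
    rw [map_pow, Uy, map_pow, map_mul, map_inv, Urep_a, Urep_c, prel10, one_pow]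

theorem Urel7 : Ua ^ 2 * Uc ^ 2 * Ub ^ 2 * (Ua * Uc) ^ 2 = 1 := by
  have h : PresentedGroup.mk Urels ((FreeGroup.of 0) ^ 2 * (FreeGroup.of 2) ^ 2 *
      (FreeGroup.of 1) ^ 2 * (FreeGroup.of 0 * FreeGroup.of 2) ^ 2) = 1 :=
    PresentedGroup.one_of_mem (by simp [Urels])
  exact h

/-- For every positive integer `m`, there is no automorphism `ρ` of `G_m = U / N_m` with
`ρ(ā) = ā⁻¹`, `ρ(b̄) = ā² b̄` and `ρ(c̄) = c̄` (this expresses the chirality of the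
polytope `P_m` whose rotation group is `G_m`). -/
theorem Gm_no_mirror_automorphism (m : ℕ) (hm : 0 < m) (hnorm : (UN m).Normal) :
    haveI := hnorm
    ¬ ∃ ρ : (UGroup ⧸ UN m) ≃* (UGroup ⧸ UN m),
        ρ (QuotientGroup.mk Ua) = (QuotientGroup.mk Ua : UGroup ⧸ UN m)⁻¹ ∧
        ρ (QuotientGroup.mk Ub) =
          (QuotientGroup.mk Ua : UGroup ⧸ UN m) ^ 2 * QuotientGroup.mk Ub ∧
        ρ (QuotientGroup.mk Uc) = (QuotientGroup.mk Uc : UGroup ⧸ UN m) := by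
  have := hnorm
  rintro ⟨ρ, ha, hb, hc⟩
  have h := congrArg (fun g : UGroup => ρ (QuotientGroup.mk' (UN m) g)) Urel7
  simp only [map_mul, map_pow, map_one, QuotientGroup.mk'_apply, ha, hb, hc] at h
  have h2 := congrArg (QuotientGroup.lift (UN m) Urep (UN_le_ker m)) h
  simp only [map_mul, map_pow, map_one, map_inv, QuotientGroup.lift_mk, Urep_a, Urep_b,
    Urep_c] at h2
  exact pmir h2
end
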